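/- Let ψ : ℝ^d → ℝ be differentiable on an open set containing Δ_d and write ℓ(p, y) = D_ψ(e_y, p). Let y_1,…,y_T ∈ {1,…,d}, let q_1,…,q_T ∈ Δ_d and p_1,…,p_T ∈ Δ_d be two forecast sequences, let x̃ ∈ Δ_d, let 𝒯 ⊆ {1,…,T} be nonempty, let p̄ = (1/|𝒯|) Σ_{t∈𝒯} e_{y_t}, and define the regret ℛ = Σ_{t∈𝒯} ℓ(p_t, y_t) − Σ_{t∈𝒯} ℓ(p̄, y_t). Then Σ_{t∈𝒯} ℓ(q_t, y_t) − Σ_{t∈𝒯} ℓ(p_t, y_t) ≥ |𝒯| · D_ψ(p̄, x̃) − | Σ_{t∈𝒯} ( ℓ(q_t, y_t) − ℓ(x̃, y_t) ) | − ℛ. -/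

import Mathlib

open scoped BigOperators

/-- Bregman divergence `D_ψ(p, q) = ψ(p) − ψ(q) − ⟨∇ψ(q), p − q⟩`. -/
noncomputable def breg {d : ℕ} (ψ : EuclideanSpace ℝ (Fin d) → ℝ)
    (p q : EuclideanSpace ℝ (Fin d)) : ℝ :=
  ψ p - ψ q - @inner ℝ _ _ (gradient ψ q) (p - q)

/-- The probability simplex Δ_d in ℝ^d. -/
def probSimplex (d : ℕ) : Set (EuclideanSpace ℝ (Fin d)) :=
  {p | (∀ j, 0 ≤ p j) ∧ ∑ j, p j = 1}

/-- The `y`-th standard basis vector of ℝ^d. -/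
noncomputable def basisVec {d : ℕ} (y : Fin d) : EuclideanSpace ℝ (Fin d) :=
  EuclideanSpace.single y 1

/-! The map `p ↦ D_ψ(p, x) - D_ψ(p, m)` is affine and equals `D_ψ(m, x)` at `p = m`, so averaging it
over outcomes with mean `m` gives `D_ψ(m, x)`. Hence the total loss of the constant forecast `x`
exceeds that of `m` by exactly `|𝒯| · D_ψ(m, x)`; comparing `q_t` with `x` produces the
approximation error, and comparing `p_t` with `m` the regret. -/

section Bregman

variable {ι E : Type*} [AddCommGroup E] [Module ℝ E]

/-- The Bregman divergence of `ψ` relative to a choice `g` of linear functional at each point,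
such as a derivative or a subgradient. Carrying `g` as data keeps the junk value of `gradient` at
points of non-differentiability out of the general results. -/
def bregmanDiv (ψ : E → ℝ) (g : E → Module.Dual ℝ E) (p q : E) : ℝ :=
  ψ p - ψ q - g q (p - q)

variable (ψ : E → ℝ) (g : E → Module.Dual ℝ E)

theorem bregmanDiv_three_point (p m x : E) :
    bregmanDiv ψ g p x =
      bregmanDiv ψ g p m + bregmanDiv ψ g m x + (g m - g x) (p - m) := by
  simp only [bregmanDiv, LinearMap.sub_apply, map_sub]
  ring

variable {s : Finset ι} {v : ι → E} {m : E}

theorem sum_bregmanDiv_eq_add_card_mul (hm : ∑ i ∈ s, v i = (s.card : ℝ) • m) (x : E) :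
    ∑ i ∈ s, bregmanDiv ψ g (v i) x =
      ∑ i ∈ s, bregmanDiv ψ g (v i) m + (s.card : ℝ) * bregmanDiv ψ g m x := by
  have deviations_sum_zero : ∑ i ∈ s, (v i - m) = 0 := by
    rw [Finset.sum_sub_distrib, hm, Finset.sum_const, Nat.cast_smul_eq_nsmul, sub_self]
  calc ∑ i ∈ s, bregmanDiv ψ g (v i) x
      = ∑ i ∈ s, (bregmanDiv ψ g (v i) m + bregmanDiv ψ g m x + (g m - g x) (v i - m)) :=
        Finset.sum_congr rfl fun i _ => bregmanDiv_three_point ψ g (v i) m x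
    _ = ∑ i ∈ s, bregmanDiv ψ g (v i) m + (s.card : ℝ) * bregmanDiv ψ g m x
          + (g m - g x) (∑ i ∈ s, (v i - m)) := by
        rw [Finset.sum_add_distrib, Finset.sum_add_distrib, Finset.sum_const, nsmul_eq_mul, map_sum]
    _ = ∑ i ∈ s, bregmanDiv ψ g (v i) m + (s.card : ℝ) * bregmanDiv ψ g m x := by
        rw [deviations_sum_zero, map_zero, add_zero]

theorem sum_bregmanDiv_sub_sum_bregmanDiv (hm : ∑ i ∈ s, v i = (s.card : ℝ) • m)
    (q p : ι → E) (x : E) :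
    ∑ i ∈ s, bregmanDiv ψ g (v i) (q i) - ∑ i ∈ s, bregmanDiv ψ g (v i) (p i) =
      (s.card : ℝ) * bregmanDiv ψ g m x
        + ∑ i ∈ s, (bregmanDiv ψ g (v i) (q i) - bregmanDiv ψ g (v i) x)
        - (∑ i ∈ s, bregmanDiv ψ g (v i) (p i) - ∑ i ∈ s, bregmanDiv ψ g (v i) m) := by
  rw [Finset.sum_sub_distrib, sum_bregmanDiv_eq_add_card_mul ψ g hm x]
  ring

theorem stmt14_general (q p : ι → E) (x : E) (hs : s.Nonempty)
    (hm : m = (s.card : ℝ)⁻¹ • ∑ i ∈ s, v i) (R : ℝ)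
    (hR : R = ∑ i ∈ s, bregmanDiv ψ g (v i) (p i) - ∑ i ∈ s, bregmanDiv ψ g (v i) m) :
    ∑ i ∈ s, bregmanDiv ψ g (v i) (q i) - ∑ i ∈ s, bregmanDiv ψ g (v i) (p i)
      ≥ (s.card : ℝ) * bregmanDiv ψ g m x
        - |∑ i ∈ s, (bregmanDiv ψ g (v i) (q i) - bregmanDiv ψ g (v i) x)|
        - R := by
  have hcard : (s.card : ℝ) ≠ 0 := Nat.cast_ne_zero.mpr hs.card_ne_zero
  have hsum : ∑ i ∈ s, v i = (s.card : ℝ) • m := by rw [hm, smul_inv_smul₀ hcard]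
  rw [sum_bregmanDiv_sub_sum_bregmanDiv ψ g hsum q p x, ← hR, sub_eq_add_neg _ |_|]
  gcongr
  exact neg_abs_le _

end Bregman

theorem breg_eq_bregmanDiv {d : ℕ} (ψ : EuclideanSpace ℝ (Fin d) → ℝ)
    (p q : EuclideanSpace ℝ (Fin d)) :
    breg ψ p q = bregmanDiv ψ (fun x => innerₗ _ (gradient ψ x)) p q :=
  rfl

/-- The calibeating corollary: improving the forecasts `q_t` to `p_t` on the bin `𝒯`
gains at least the conditional calibration score, minus the binning approximation error
and the regret `ℛ` of `(p_t)` on the bin. The loss is `ℓ(p, y) = D_ψ(e_y, p)`. -/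
theorem stmt14 {d T : ℕ} (ψ : EuclideanSpace ℝ (Fin d) → ℝ)
    (U : Set (EuclideanSpace ℝ (Fin d))) (hU : IsOpen U) (hUs : probSimplex d ⊆ U)
    (hdiff : ∀ x ∈ U, DifferentiableAt ℝ ψ x)
    (y : Fin T → Fin d) (q p : Fin T → EuclideanSpace ℝ (Fin d))
    (hq : ∀ t, q t ∈ probSimplex d) (hp : ∀ t, p t ∈ probSimplex d)
    (xt : EuclideanSpace ℝ (Fin d)) (hxt : xt ∈ probSimplex d)
    (𝒯 : Finset (Fin T)) (h𝒯 : 𝒯.Nonempty)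
    (pbar : EuclideanSpace ℝ (Fin d))
    (hpbar : pbar = (𝒯.card : ℝ)⁻¹ • ∑ t ∈ 𝒯, basisVec (y t))
    (ℛ : ℝ)
    (hℛ : ℛ = ∑ t ∈ 𝒯, breg ψ (basisVec (y t)) (p t)
              - ∑ t ∈ 𝒯, breg ψ (basisVec (y t)) pbar) :
    ∑ t ∈ 𝒯, breg ψ (basisVec (y t)) (q t) - ∑ t ∈ 𝒯, breg ψ (basisVec (y t)) (p t)
      ≥ (𝒯.card : ℝ) * breg ψ pbar xt
        - |∑ t ∈ 𝒯, (breg ψ (basisVec (y t)) (q t) - breg ψ (basisVec (y t)) xt)|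
        - ℛ := by
  simp only [breg_eq_bregmanDiv] at hℛ ⊢
  exact stmt14_general ψ _ q p xt h𝒯 hpbar ℛ hℛ
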